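/- In the inductive step of the linear lower bound construction, the reserving execution interval α must contain a write operation to a register outside R. Precisely: let C_r, U, V, L, P, Q, R = R_s ∪ R_c be as in the inductive hypothesis, let T = U \ V \ L \ P \ Q, let α ∈ Res(C_r, P) be a reserving execution interval ending with a pair of P returning 0, let γ_c be the block write to all registers of R_c by the covering processes (but not their clones) of the pairs in V, and suppose the configuration D reached after E_r γ_c is 1-valent_T^{m+1}. Then α contains a write to a register not in R. -/

import Mathlib

/-!  A model of asynchronous shared memory with atomic read-write registers and
anonymous processes: all processes run the same (possibly nondeterministic /
randomized) code, given by an `Algo`. -/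

/-- A shared-memory operation: read value `v` from register `r`, or write `v` to `r`. -/
inductive Op (Reg Val : Type) where
  | read  (r : Reg) (v : Val)
  | write (r : Reg) (v : Val)

/-- The register accessed by an operation. -/
def Op.target {Reg Val : Type} : Op Reg Val → Reg
  | .read r _ => r
  | .write r _ => r

/-- An anonymous algorithm: the initial state determined by the binary input,
the initial register contents, the (possibly nondeterministic) transition
relation between local states, and the output (decision, if already returned). -/
structure Algo (Reg Val State : Type) where
  init : Bool → State
  initReg : Reg → Val
  step : State → Op Reg Val → State → Prop
  output : State → Option Bool

/-- A configuration: the state of every process and the contents of every register. -/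
structure Config (Proc Reg Val State : Type) where
  pstate : Proc → State
  regs : Reg → Val

variable {Proc Reg Val State : Type}

/-- Process `p` performs operation `o`, taking configuration `C` to `C'`:
a read must read the actual register contents, a write updates the register. -/
def Algo.Takes [DecidableEq Reg] (A : Algo Reg Val State) (C : Config Proc Reg Val State)
    (p : Proc) (o : Op Reg Val) (C' : Config Proc Reg Val State) : Prop :=
  A.step (C.pstate p) o (C'.pstate p) ∧ (∀ q, q ≠ p → C'.pstate q = C.pstate q) ∧
    match o with
    | .read r v => C.regs r = v ∧ C'.regs = C.regs
    | .write r v => C'.regs = Function.update C.regs r v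

/-- `A.Exec C sched C'`: the schedule `sched` is a legal execution interval taking
configuration `C` to configuration `C'`. -/
inductive Algo.Exec [DecidableEq Reg] (A : Algo Reg Val State) :
    Config Proc Reg Val State → List (Proc × Op Reg Val) → Config Proc Reg Val State → Prop
  | nil (C : Config Proc Reg Val State) : Algo.Exec A C [] C
  | cons {C C₁ C₂ : Config Proc Reg Val State} {p : Proc} {o : Op Reg Val}
      {l : List (Proc × Op Reg Val)} :
      A.Takes C p o C₁ → Algo.Exec A C₁ l C₂ → Algo.Exec A C ((p, o) :: l) C₂

/-- The initial configuration for given inputs. -/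
def Algo.initConfig (A : Algo Reg Val State) (inputs : Proc → Bool) :
    Config Proc Reg Val State :=
  ⟨fun p => A.init (inputs p), A.initReg⟩

/-- `C` is reachable from the initial configuration for `inputs`. -/
def Algo.Reachable [DecidableEq Reg] (A : Algo Reg Val State) (inputs : Proc → Bool)
    (C : Config Proc Reg Val State) : Prop :=
  ∃ sched, A.Exec (A.initConfig inputs) sched C

/-- The set of registers written to during `sched`. -/
def writes (sched : List (Proc × Op Reg Val)) : Set Reg :=
  {r | ∃ p v, (p, Op.write r v) ∈ sched}

/-- The list of registers written to (with multiplicity) during `sched`. -/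
def writesList (sched : List (Proc × Op Reg Val)) : List Reg :=
  sched.filterMap fun s => match s.2 with | .write r _ => some r | .read _ _ => none

/-- All steps of `sched` are taken by process `p`. -/
def Solo (p : Proc) (sched : List (Proc × Op Reg Val)) : Prop := ∀ s ∈ sched, s.1 = p

/-- Some solo execution of process `p` from `C` ends with `p` having returned `b`. -/
def SoloReturns [DecidableEq Reg] (A : Algo Reg Val State) (C : Config Proc Reg Val State)
    (p : Proc) (b : Bool) : Prop :=
  ∃ sched C', Solo p sched ∧ A.Exec C sched C' ∧ A.output (C'.pstate p) = some b

/-- Agreement: in every reachable configuration, all returned outputs are equal. -/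
def Agreement [DecidableEq Reg] (A : Algo Reg Val State) (inputs : Proc → Bool) : Prop :=
  ∀ C, A.Reachable inputs C → ∀ p q bp bq,
    A.output (C.pstate p) = some bp → A.output (C.pstate q) = some bq → bp = bq

/-- Validity: every returned output is the input of some participating process. -/
def Validity [DecidableEq Reg] (A : Algo Reg Val State) (inputs : Proc → Bool) : Prop :=
  ∀ sched C, A.Exec (A.initConfig inputs) sched C → ∀ p b,
    A.output (C.pstate p) = some b → ∃ q o, (q, o) ∈ sched ∧ inputs q = b

/-- Nondeterministic solo termination: from every reachable configuration, every
process that has not returned has a finite solo execution in which it returns. -/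
def SoloTermination [DecidableEq Reg] (A : Algo Reg Val State) (inputs : Proc → Bool) : Prop :=
  ∀ C, A.Reachable inputs C → ∀ p, A.output (C.pstate p) = none →
    ∃ sched C', Solo p sched ∧ A.Exec C sched C' ∧ (A.output (C'.pstate p)).isSome

/-- Every execution writes to at most `m` distinct registers. -/
def SpaceBound [DecidableEq Reg] (A : Algo Reg Val State) (inputs : Proc → Bool)
    (m : ℕ) : Prop :=
  ∀ sched C, A.Exec (A.initConfig inputs) sched C → (writesList sched).toFinset.card ≤ m
/-- Process `p` covers register `r` in configuration `C`: its next step can be a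
write to `r`. -/
def Covers (A : Algo Reg Val State) (C : Config Proc Reg Val State)
    (p : Proc) (r : Reg) : Prop :=
  ∃ v s', A.step (C.pstate p) (Op.write r v) s'

/-- `γ` is a reserving execution interval from `C` by the processes of `P`:
every step is by a process of `P`; at every point, each register written so far
during `γ` is covered by a distinct reserved process of `P`; and a process of `P`
(that had not returned) may return only in the last step of `γ`. -/
def Reserving [DecidableEq Reg] (A : Algo Reg Val State) (C : Config Proc Reg Val State)
    (P : Finset Proc) (γ : List (Proc × Op Reg Val)) : Prop :=
  (∀ s ∈ γ, s.1 ∈ P) ∧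
  (∀ γ₁ γ₂ C₁, γ = γ₁ ++ γ₂ → A.Exec C γ₁ C₁ →
    ∃ f : Reg → Proc, Set.InjOn f (writes γ₁) ∧
      ∀ r ∈ writes γ₁, f r ∈ P ∧ Covers A C₁ (f r) r) ∧
  (∀ γ₁ γ₂ C₁, γ = γ₁ ++ γ₂ → γ₂ ≠ [] → A.Exec C γ₁ C₁ →
    ∀ p ∈ P, A.output (C.pstate p) = none → A.output (C₁.pstate p) = none)

/-- `γ ∈ Res(C, P)`: `γ` is a reserving execution interval from `C` by `P` that
ends with some process of `P` having returned. -/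
def InRes [DecidableEq Reg] (A : Algo Reg Val State) (C : Config Proc Reg Val State)
    (P : Finset Proc) (γ : List (Proc × Op Reg Val)) : Prop :=
  Reserving A C P γ ∧ ∃ C', A.Exec C γ C' ∧ ∃ p ∈ P, (A.output (C'.pstate p)).isSome

/-- `γ` is a reserving execution interval from `C` by `P` (a member of `Res(C,P)`)
that ends with some process of `P` returning the value `b`. -/
def ResReturns [DecidableEq Reg] (A : Algo Reg Val State) (C : Config Proc Reg Val State)
    (P : Finset Proc) (γ : List (Proc × Op Reg Val)) (b : Bool) : Prop :=
  Reserving A C P γ ∧ ∃ C', A.Exec C γ C' ∧ ∃ p ∈ P, A.output (C'.pstate p) = some b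
/-!  Process–clone pairs.  The system consists of pairs indexed by `Idx`; the
process of pair `i` is `(i, false)` and its dedicated clone is `(i, true)`.
Both members of a pair get the same input and, while the pair is not split, the
clone performs the same operation immediately after the process, so the two stay
in identical states. -/

/-- The set of processes and clones of the pairs in `P`. -/
def pairProcs {Idx : Type} (P : Finset Idx) : Finset (Idx × Bool) :=
  P ×ˢ (Finset.univ : Finset Bool)

/-- Pair `i` is in sync (not split): process and clone are in identical states. -/
def InSync {Idx : Type} (C : Config (Idx × Bool) Reg Val State) (i : Idx) : Prop :=
  C.pstate (i, true) = C.pstate (i, false)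

/-- Pair `i` is split on register `reg` with pending value `w`: the clone is one
write behind the process, poised to perform the identical write of `w` to `reg`,
which would reunite it with the process's current state. -/
def SplitOn {Idx : Type} (A : Algo Reg Val State) (C : Config (Idx × Bool) Reg Val State)
    (i : Idx) (reg : Reg) (w : Val) : Prop :=
  ¬ InSync C i ∧ A.step (C.pstate (i, true)) (Op.write reg w) (C.pstate (i, false))

/-- Pair `i` is a fresh split pair on `reg`: it is split on `reg` and the register
still holds the written value (it has not been overwritten), so the clone is poised
to write the very value currently in the register. -/
def FreshSplitOn {Idx : Type} (A : Algo Reg Val State)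
    (C : Config (Idx × Bool) Reg Val State) (i : Idx) (reg : Reg) : Prop :=
  SplitOn A C i reg (C.regs reg)

/-- Pair `i` is a stale split pair on `reg`: it is split on `reg` but the register
has been overwritten since the process's write. -/
def StaleSplitOn {Idx : Type} (A : Algo Reg Val State)
    (C : Config (Idx × Bool) Reg Val State) (i : Idx) (reg : Reg) : Prop :=
  (∃ w, SplitOn A C i reg w) ∧ ¬ FreshSplitOn A C i reg
theorem exec_append_aux [DecidableEq Reg] {A : Algo Reg Val State}
    {C D F : Config Proc Reg Val State} {l l' : List (Proc × Op Reg Val)}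
    (h : A.Exec C l D) (h' : A.Exec D l' F) : A.Exec C (l ++ l') F := by
  induction h with
  | nil => exact h'
  | cons ht _ ih => exact Algo.Exec.cons ht (ih h')

theorem exec_frame_state [DecidableEq Reg] {A : Algo Reg Val State}
    {C D : Config Proc Reg Val State} {l : List (Proc × Op Reg Val)}
    (h : A.Exec C l D) (p : Proc) (hp : ∀ s ∈ l, s.1 ≠ p) : D.pstate p = C.pstate p := by
  induction h with
  | nil => rfl
  | cons ht _ ih =>
    rw [ih (fun s hs => hp s (List.mem_cons_of_mem _ hs))]
    exact ht.2.1 p (fun e => hp _ List.mem_cons_self e.symm)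

theorem exec_frame_regs [DecidableEq Reg] {A : Algo Reg Val State}
    {C D : Config Proc Reg Val State} {l : List (Proc × Op Reg Val)}
    (h : A.Exec C l D) (x : Reg) (hx : x ∉ writes l) : D.regs x = C.regs x := by
  induction h with
  | nil => rfl
  | @cons C C₁ C₂ p o l ht _ ih =>
    rw [ih (fun ⟨q, v, hs⟩ => hx ⟨q, v, List.mem_cons_of_mem _ hs⟩)]
    have h3 := ht.2.2
    cases o with
    | read r v => simp only at h3; rw [h3.2]
    | write r v =>
      simp only at h3
      rw [h3, Function.update_of_ne]
      rintro rfl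
      exact hx ⟨p, v, List.mem_cons_self⟩

theorem exec_transfer [DecidableEq Reg] {A : Algo Reg Val State}
    {C D : Config Proc Reg Val State} {l : List (Proc × Op Reg Val)}
    (h : A.Exec C l D) (S : Set Proc) (hS : ∀ s ∈ l, s.1 ∈ S) :
    ∀ C' : Config Proc Reg Val State, (∀ p ∈ S, C'.pstate p = C.pstate p) →
    (∀ q x v, (q, Op.read x v) ∈ l → C'.regs x = C.regs x) →
    ∃ D', A.Exec C' l D' ∧ (∀ p ∈ S, D'.pstate p = D.pstate p) ∧
      (∀ p, p ∉ S → D'.pstate p = C'.pstate p) ∧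
      (∀ x, (C'.regs x = C.regs x ∨ x ∈ writes l) → D'.regs x = D.regs x) := by
  classical
  induction h with
  | nil C =>
    intro C' h1 _
    refine ⟨C', .nil _, h1, fun _ _ => rfl, ?_⟩
    rintro x (hx | ⟨p, v, hx⟩)
    · exact hx
    · simp at hx
  | @cons C C₁ C₂ p o l ht _ ih =>
    intro C' h1 h2
    obtain ⟨hs, hne, hr⟩ := ht
    have hpS : p ∈ S := hS _ List.mem_cons_self
    obtain ⟨C₁', ht', hreg, hwr⟩ : ∃ C₁' : Config Proc Reg Val State,
        (A.Takes C' p o C₁' ∧ C₁'.pstate = Function.update C'.pstate p (C₁.pstate p)) ∧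
        (∀ x, C'.regs x = C.regs x → C₁'.regs x = C₁.regs x) ∧
        (∀ x v, o = .write x v → C₁'.regs x = C₁.regs x) := by
      cases o with
      | read r v =>
        simp only at hr
        refine ⟨⟨Function.update C'.pstate p (C₁.pstate p), C'.regs⟩,
          ⟨⟨by simpa [h1 p hpS] using hs, fun q hq => by simp [hq], ?_⟩, rfl⟩, ?_, ?_⟩
        · exact ⟨(h2 p r v List.mem_cons_self).trans hr.1, rfl⟩
        · intro x hx
          simpa [hr.2] using hx
        · intro x v h; cases h
      | write r v =>
        simp only at hr
        refine ⟨⟨Function.update C'.pstate p (C₁.pstate p), Function.update C'.regs r v⟩,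
          ⟨⟨by simpa [h1 p hpS] using hs, fun q hq => by simp [hq], rfl⟩, rfl⟩, ?_, ?_⟩
        · intro x hx
          by_cases hxr : x = r
          · subst hxr; simp [hr]
          · simp [hr, hxr, hx]
        · intro x v h; cases h; simp [hr]
    obtain ⟨ht', hps⟩ := ht'
    obtain ⟨D', hD, hD1, hD2, hD3⟩ := ih (fun s hs => hS s (List.mem_cons_of_mem _ hs)) C₁'
      (by
        intro q hq
        by_cases hqp : q = p
        · subst hqp; simp [hps]
        · rw [hps, Function.update_of_ne hqp, h1 q hq, hne q hqp])
      (fun q x v hm => hreg x (h2 q x v (List.mem_cons_of_mem _ hm)))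
    refine ⟨D', .cons ht' hD, hD1, ?_, ?_⟩
    · intro q hq
      rw [hD2 q hq, hps, Function.update_of_ne]
      rintro rfl
      exact hq hpS
    · rintro x (hx | ⟨q, v, hx⟩)
      · exact hD3 x (Or.inl (hreg x hx))
      · rcases List.mem_cons.1 hx with e | hx
        · exact hD3 x (Or.inl (hwr x v (by cases e; rfl)))
        · exact hD3 x (Or.inr ⟨q, v, hx⟩)

theorem exec_block [DecidableEq Reg] {A : Algo Reg Val State}
    (v : Reg → Proc) (w : Reg → Val) (st : Reg → State) (l : List Reg) :
    ∀ C : Config Proc Reg Val State, l.Nodup → (∀ x ∈ l, ∀ y ∈ l, v x = v y → x = y) →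
    (∀ x ∈ l, A.step (C.pstate (v x)) (Op.write x (w x)) (st x)) →
    ∃ δ D, A.Exec C δ D ∧ (∀ p, (∀ x ∈ l, p ≠ v x) → D.pstate p = C.pstate p) ∧
      (∀ x ∈ l, D.regs x = w x) ∧ (∀ x, x ∉ l → D.regs x = C.regs x) := by
  classical
  induction l with
  | nil => intro C _ _ _; exact ⟨[], C, .nil _, by simp, by simp, by simp⟩
  | cons a l ih =>
    intro C hn hi hs
    rw [List.nodup_cons] at hn
    have hva : ∀ x ∈ l, v x ≠ v a := fun x hx e =>
      hn.1 (hi x (List.mem_cons_of_mem _ hx) a List.mem_cons_self e ▸ hx)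
    obtain ⟨δ, D, h1, h2, h3, h4⟩ := ih
      ⟨Function.update C.pstate (v a) (st a), Function.update C.regs a (w a)⟩ hn.2
      (fun x hx y hy => hi x (List.mem_cons_of_mem _ hx) y (List.mem_cons_of_mem _ hy))
      (fun x hx => by
        simpa [Function.update_of_ne (hva x hx)] using hs x (List.mem_cons_of_mem _ hx))
    refine ⟨(v a, .write a (w a)) :: δ, D, .cons ⟨?_, ?_, rfl⟩ h1, ?_, ?_, ?_⟩
    · simpa using hs a List.mem_cons_self
    · intro q hq; simp [hq]
    · intro p hp
      rw [h2 p (fun x hx => hp x (List.mem_cons_of_mem _ hx))]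
      simp [hp a List.mem_cons_self]
    · intro x hx
      rcases List.mem_cons.1 hx with rfl | hx
      · rw [h4 x hn.1]; simp
      · exact h3 x hx
    · intro x hx
      rw [List.mem_cons, not_or] at hx
      rw [h4 x hx.2]; simp [hx.1]

/-- **Claim 4.**  In the inductive step of the linear lower bound, with
`C_r`, `V`, `L`, `P`, `Q`, `R = R_s ∪ R_c` as in the inductive hypothesis,
`T = U \ V \ L \ P \ Q`, `α ∈ Res(C_r, P)` a reserving interval ending with a pair of
`P` returning `0`, `γ_c` the block write to all registers of `R_c` by the covering
processes (but not their clones) of the pairs of `V`, and the configuration `D`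
reached after `E_r γ_c` being `1`-valent w.r.t. `T` (in the `{}^{m+1}` sense), the
interval `α` must contain a write to a register outside `R`. -/
theorem alpha_writes_outside_R {Reg Val State : Type} [DecidableEq Reg]
    (m r : ℕ) (hr : r ≤ m) (A : Algo Reg Val State)
    (ipt : Fin (5*m+6+2*r) → Bool)
    (hAgree : Agreement A (fun p : Fin (5*m+6+2*r) × Bool => ipt p.1))
    (hValid : Validity A (fun p : Fin (5*m+6+2*r) × Bool => ipt p.1))
    (hTerm : SoloTermination A (fun p : Fin (5*m+6+2*r) × Bool => ipt p.1))
    (hSpace : SpaceBound A (fun p : Fin (5*m+6+2*r) × Bool => ipt p.1) m)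
    -- the inductive configuration `C_r`, reached by `E_r`
    (E : List ((Fin (5*m+6+2*r) × Bool) × Op Reg Val))
    (C : Config (Fin (5*m+6+2*r) × Bool) Reg Val State)
    (hE : A.Exec (A.initConfig fun p => ipt p.1) E C)
    -- property 1 of the inductive hypothesis
    (Rs Rc : Finset Reg) (vfun : Reg → Fin (5*m+6+2*r))
    (hdisj : Disjoint Rs Rc) (hcard : (Rs ∪ Rc).card = r)
    (hinj : Set.InjOn vfun ↑(Rs ∪ Rc))
    (hRs : ∀ reg ∈ Rs, FreshSplitOn A C (vfun reg) reg)
    (hRsAll : ∀ reg : Reg, (∃ i, FreshSplitOn A C i reg) → reg ∈ Rs)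
    (hRc : ∀ reg ∈ Rc, InSync C (vfun reg) ∧
      Covers A C ((vfun reg, false) : Fin (5*m+6+2*r) × Bool) reg ∧
      Covers A C ((vfun reg, true) : Fin (5*m+6+2*r) × Bool) reg)
    -- property 2 of the inductive hypothesis
    (L : Finset (Fin (5*m+6+2*r))) (lreg : Fin (5*m+6+2*r) → Reg)
    (hL : L.card ≤ r) (hlinj : Set.InjOn lreg ↑L)
    (hLsplit : ∀ i ∈ L, lreg i ∈ Rs ∪ Rc ∧ StaleSplitOn A C i (lreg i))
    (hLall : ∀ i reg, StaleSplitOn A C i reg → i ∈ L)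
    -- property 3 of the inductive hypothesis
    (P Q : Finset (Fin (5*m+6+2*r)))
    (hPQ : Disjoint P Q)
    (hPQVL : Disjoint (P ∪ Q) ((Rs ∪ Rc).image vfun ∪ L))
    (hsync : ∀ i ∈ P ∪ Q, InSync C i)
    (hPQcard : P.card + Q.card ≤ 2*m+4)
    -- the reserving execution interval `α` returning `0`
    (α : List ((Fin (5*m+6+2*r) × Bool) × Op Reg Val))
    (hα : ResReturns A C (pairProcs P) α false)
    -- some reserving execution interval `β ∈ Res(C_r, Q)` returns `1`
    (β : List ((Fin (5*m+6+2*r) × Bool) × Op Reg Val))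
    (hβ : ResReturns A C (pairProcs Q) β true)
    -- the block write `γ_c` to `R_c` by the covering processes (not the clones)
    (γc : List ((Fin (5*m+6+2*r) × Bool) × Op Reg Val))
    (lc : List Reg) (wval : Reg → Val)
    (hlc : lc.Nodup) (hlcR : lc.toFinset = Rc)
    (hγc : γc = lc.map fun reg => (((vfun reg, false) : Fin (5*m+6+2*r) × Bool),
      Op.write reg (wval reg)))
    -- the configuration `D` after `E_r γ_c` is `1`-valent w.r.t. `T`
    (D : Config (Fin (5*m+6+2*r) × Bool) Reg Val State)
    (hD : A.Exec C γc D)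
    (hDval : ∃ T' : Finset (Fin (5*m+6+2*r)),
      T' ⊆ Finset.univ \ ((Rs ∪ Rc).image vfun ∪ L ∪ P ∪ Q) ∧ T'.card = m + 1 ∧
      ∃ γ, ResReturns A D (pairProcs T') γ true) :
    ∃ s ∈ α, ∃ reg v, s.2 = Op.write reg v ∧ reg ∉ Rs ∪ Rc := by
  classical
  by_contra hcon
  have hαw : ∀ x, x ∉ Rs ∪ Rc → x ∉ writes α := by
    rintro x hx ⟨p, v, hm⟩
    exact hcon ⟨_, hm, x, v, rfl, hx⟩
  obtain ⟨⟨hαP, -, -⟩, C1, hC1, p0, hp0, hout0⟩ := hα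
  obtain ⟨T', hT', -, γ, ⟨hγT, -, -⟩, F, hF, p1, hp1, hout1⟩ := hDval
  have memPP : ∀ (S : Finset (Fin (5*m+6+2*r))) p, p ∈ pairProcs S ↔ p.1 ∈ S := by
    intro S p; simp [pairProcs]
  have hVP : ∀ x ∈ Rs ∪ Rc, vfun x ∉ P := fun x hx hP =>
    Finset.disjoint_left.1 hPQVL (Finset.mem_union_left _ hP)
      (Finset.mem_union_left _ (Finset.mem_image_of_mem _ hx))
  have hT : ∀ i ∈ T', i ∉ P ∧ ∀ x ∈ Rs ∪ Rc, vfun x ≠ i := by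
    intro i hi
    have h := (Finset.mem_sdiff.1 (hT' hi)).2
    refine ⟨fun hP => h (by simp [hP]), fun x hx e => h ?_⟩
    rw [← e]
    exact Finset.mem_union_left _ (Finset.mem_union_left _ (Finset.mem_union_left _
      (Finset.mem_image_of_mem _ hx)))
  have hC1st : ∀ p : Fin (5*m+6+2*r) × Bool, p.1 ∉ P → C1.pstate p = C.pstate p := by
    intro p hp
    refine exec_frame_state hC1 p (fun s hs e => hp ?_)
    rw [← e]
    exact (memPP P _).1 (hαP s hs)
  -- the clones of the fresh split pairs restore the registers of `Rs`
  obtain ⟨δ, C2, hC2, hC2st, hC2Rs, hC2n⟩ := exec_block (A := A)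
    (fun x => ((vfun x, true) : Fin (5*m+6+2*r) × Bool)) C.regs
    (fun x => C.pstate (vfun x, false)) Rs.toList C1 Rs.nodup_toList
    (by
      intro x hx y hy e
      rw [Finset.mem_toList] at hx hy
      exact hinj (by simp [hx]) (by simp [hy]) (congrArg Prod.fst e))
    (by
      intro x hx
      rw [Finset.mem_toList] at hx
      rw [hC1st _ (hVP x (Finset.mem_union_left _ hx))]
      exact (hRs x hx).2)
  simp only [Finset.mem_toList] at hC2st hC2Rs hC2n
  have hγmem : ∀ s ∈ γc, ∃ x ∈ Rc, s = (((vfun x, false) : Fin (5*m+6+2*r) × Bool),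
      Op.write x (wval x)) := by
    intro s hs
    rw [hγc, List.mem_map] at hs
    obtain ⟨x, hx, rfl⟩ := hs
    exact ⟨x, by rw [← hlcR]; simpa using hx, rfl⟩
  obtain ⟨C3, hC3, hC3S, hC3n, hC3r⟩ := exec_transfer hD
    {p | ∃ x ∈ Rc, p = (vfun x, false)}
    (by
      intro s hs
      obtain ⟨x, hx, rfl⟩ := hγmem s hs
      exact ⟨x, hx, rfl⟩) C2
    (by
      rintro p ⟨x, hx, rfl⟩
      rw [hC2st _ (fun y _ e => by simpa using congrArg Prod.snd e)]
      exact hC1st _ (hVP x (Finset.mem_union_right _ hx)))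
    (by
      intro q x v hm
      obtain ⟨y, _, e⟩ := hγmem _ hm
      cases e)
  have hregs : ∀ x, C3.regs x = D.regs x := by
    intro x
    apply hC3r
    by_cases hxc : x ∈ Rc
    · right
      refine ⟨(vfun x, false), wval x, ?_⟩
      rw [hγc, List.mem_map]
      exact ⟨x, by rw [← hlcR] at hxc; simpa using hxc, rfl⟩
    · left
      by_cases hxs : x ∈ Rs
      · exact hC2Rs x hxs
      · rw [hC2n x hxs]
        exact exec_frame_regs hC1 x (hαw x (by simp [hxs, hxc]))
  obtain ⟨C4, hC4, hC4S, hC4n, -⟩ := exec_transfer hF {p | p.1 ∈ T'}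
    (fun s hs => (memPP T' _).1 (hγT s hs)) C3
    (by
      intro p hp
      obtain ⟨hpP, hpV⟩ := hT p.1 hp
      have h3 : C3.pstate p = C2.pstate p := by
        apply hC3n
        rintro ⟨x, hx, rfl⟩
        exact hpV x (Finset.mem_union_right _ hx) rfl
      have h2 : C2.pstate p = C1.pstate p := by
        apply hC2st
        rintro x hx rfl
        exact hpV x (Finset.mem_union_left _ hx) rfl
      have hd : D.pstate p = C.pstate p := by
        refine exec_frame_state hD p (fun s hs e => ?_)
        obtain ⟨x, hx, rfl⟩ := hγmem s hs
        exact hpV x (Finset.mem_union_right _ hx) (congrArg Prod.fst e)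
      rw [h3, h2, hC1st p hpP, hd])
    (fun _ x _ _ => hregs x)
  have hp0P : p0.1 ∈ P := (memPP P _).1 hp0
  have e0 : C4.pstate p0 = C1.pstate p0 := by
    rw [hC4n p0 (fun h => (hT p0.1 h).1 hp0P), hC3n, hC2st]
    · rintro x hx rfl
      exact hVP x (Finset.mem_union_left _ hx) hp0P
    · rintro ⟨x, hx, rfl⟩
      exact hVP x (Finset.mem_union_right _ hx) hp0P
  have e1 : C4.pstate p1 = F.pstate p1 := hC4S p1 ((memPP T' _).1 hp1)
  have := hAgree C4 ⟨_, exec_append_aux hE (exec_append_aux hC1 (exec_append_aux hC2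
    (exec_append_aux hC3 hC4)))⟩ p0 p1 false true (by rw [e0]; exact hout0)
    (by rw [e1]; exact hout1)
  cases this
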